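/- (Theorem 2, utility uniformity) In any strongly competitive normalized two-player price-anticipating allocation game, at every Nash equilibrium each user's utility is at least 1/2 and at most 1; consequently the utility uniformity min_i U_i / max_i U_i is at least 1/2, and this bound is tight in the worst case. -/

import Mathlib

open Finset

/-- User `i`'s utility at the bid profile `x` (division by zero is zero, matching the
convention that a machine with no bids is allocated to nobody). -/
noncomputable def util (m n : ℕ) (w x : Fin m → Fin n → ℝ) (i : Fin m) : ℝ :=
  ∑ j, w i j * (x i j / ∑ k, x k j)

/-- A bid profile is feasible if all bids are nonnegative and each user spends exactly
his budget. -/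
def Feasible (m n : ℕ) (X : Fin m → ℝ) (x : Fin m → Fin n → ℝ) : Prop :=
  (∀ i j, 0 ≤ x i j) ∧ ∀ i, ∑ j, x i j = X i

/-- Nash equilibrium: a feasible profile where no user can strictly increase his utility
by unilaterally replacing his own bid vector with another feasible one. -/
def IsNash (m n : ℕ) (X : Fin m → ℝ) (w x : Fin m → Fin n → ℝ) : Prop :=
  Feasible m n X x ∧
    ∀ (i : Fin m) (xi : Fin n → ℝ), (∀ j, 0 ≤ xi j) → ∑ j, xi j = X i →
      util m n w (Function.update x i xi) i ≤ util m n w x i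

/-! A user who bids in proportion to the total `v` of the other users' bids on each machine gets
the fraction `X i / ∑ k, X k` of every machine on which `v` is positive; adding a small `δ` to
every `v j` extends this, up to `O(δ)`, to the remaining machines. Letting `δ → 0` bounds every
equilibrium utility from below.

For tightness, the share `s ↦ s / (s + v)` is concave, so equal marginal utilities on all machines
suffice for a best response. Hence every profile in which each machine receives a positive bid from
somebody other than `i`, for all `i`, is an equilibrium for suitable weights. For the bids
`(1 - p, p)` and `(1 - p ^ 3, p ^ 3)` and `p → 0`, the first user gets almost all of the second
machine, which carries almost all of his weight, while the second user's weight is concentrated on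
the first machine, which is split almost equally. -/

open Filter Topology

section Game

variable {m n : ℕ} {X : Fin m → ℝ} {w x : Fin m → Fin n → ℝ}

/-- The total bid on machine `j` of the users other than `i`, that is, the price that `i` faces
before bidding himself. -/
noncomputable def opposingBid (x : Fin m → Fin n → ℝ) (i : Fin m) (j : Fin n) : ℝ :=
  ∑ k ∈ univ.erase i, x k j

lemma add_opposingBid (x : Fin m → Fin n → ℝ) (i : Fin m) (j : Fin n) :
    x i j + opposingBid x i j = ∑ k, x k j :=
  add_sum_erase univ (x · j) (mem_univ i)

lemma opposingBid_nonneg (hx : ∀ i j, 0 ≤ x i j) (i : Fin m) (j : Fin n) :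
    0 ≤ opposingBid x i j :=
  sum_nonneg fun k _ => hx k j

lemma budget_add_sum_opposingBid (hx : ∀ i, ∑ j, x i j = X i) (i : Fin m) :
    X i + ∑ j, opposingBid x i j = ∑ k, X k := by
  simp only [← hx, ← sum_add_distrib, add_opposingBid]
  exact sum_comm

lemma opposingBid_update (x : Fin m → Fin n → ℝ) (i : Fin m) (s : Fin n → ℝ) (j : Fin n) :
    opposingBid (Function.update x i s) i j = opposingBid x i j :=
  sum_congr rfl fun k hk => by rw [Function.update_of_ne (ne_of_mem_erase hk)]

lemma util_eq_sum_opposingBid (w x : Fin m → Fin n → ℝ) (i : Fin m) :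
    util m n w x i = ∑ j, w i j * (x i j / (x i j + opposingBid x i j)) := by
  simp only [util, add_opposingBid]

lemma util_update_self (w x : Fin m → Fin n → ℝ) (i : Fin m) (s : Fin n → ℝ) :
    util m n w (Function.update x i s) i = ∑ j, w i j * (s j / (s j + opposingBid x i j)) := by
  simp only [util_eq_sum_opposingBid, opposingBid_update, Function.update_self]

lemma util_le_sum_weight {i : Fin m} (hw : ∀ j, 0 ≤ w i j) (hx : ∀ i j, 0 ≤ x i j) :
    util m n w x i ≤ ∑ j, w i j :=
  sum_le_sum fun j _ => mul_le_of_le_one_right (hw j) <|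
    div_le_one_of_le₀ (single_le_sum (f := (x · j)) (fun k _ => hx k j) (mem_univ i))
      (sum_nonneg fun k _ => hx k j)

lemma IsNash.budget_mul_sum_weight_le_perturbed (hN : IsNash m n X w x) {i : Fin m}
    (hw : ∀ j, 0 ≤ w i j) (hX : 0 < X i) {δ : ℝ} (hδ : 0 < δ) :
    X i * ∑ j, w i j ≤ (∑ k, X k + n * δ) * util m n w x i := by
  obtain ⟨⟨hx, hbudget⟩, hbest⟩ := hN
  set v := opposingBid x i
  have hv (j : Fin n) : 0 ≤ v j := opposingBid_nonneg hx i j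
  set D := ∑ j, (v j + δ)
  have hD : 0 < D := by
    refine sum_pos (fun j _ => add_pos_of_nonneg_of_pos (hv j) hδ) ?_
    exact nonempty_of_sum_ne_zero (hbudget i ▸ hX.ne')
  have htotal : X i + D = ∑ k, X k + n * δ := by
    simp only [D, sum_add_distrib, sum_const, card_univ, Fintype.card_fin, nsmul_eq_mul]
    rw [← add_assoc, budget_add_sum_opposingBid hbudget]
  set s : Fin n → ℝ := fun j => X i * (v j + δ) / D
  have hs (j : Fin n) : 0 < s j := div_pos (mul_pos hX (add_pos_of_nonneg_of_pos (hv j) hδ)) hD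
  have hs_sum : ∑ j, s j = X i := by
    rw [← sum_div, ← mul_sum, mul_div_cancel_right₀ _ hD.ne']
  have hshare (j : Fin n) : X i / (X i + D) ≤ s j / (s j + v j) := by
    have hDs : D * s j = X i * (v j + δ) := mul_div_cancel₀ _ hD.ne'
    rw [div_le_div_iff₀ (by positivity) (add_pos_of_pos_of_nonneg (hs j) (hv j))]
    linarith [mul_pos hX hδ]
  rw [← htotal, ← div_le_iff₀' (by positivity)]
  calc X i * (∑ j, w i j) / (X i + D) = ∑ j, w i j * (X i / (X i + D)) := by
        rw [← sum_mul]; ring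
    _ ≤ ∑ j, w i j * (s j / (s j + v j)) :=
        sum_le_sum fun j _ => mul_le_mul_of_nonneg_left (hshare j) (hw j)
    _ = util m n w (Function.update x i s) i := (util_update_self w x i s).symm
    _ ≤ util m n w x i := hbest i s (fun j => (hs j).le) hs_sum

theorem IsNash.budget_mul_sum_weight_le (hN : IsNash m n X w x) {i : Fin m}
    (hw : ∀ j, 0 ≤ w i j) (hX : 0 < X i) :
    X i * ∑ j, w i j ≤ (∑ k, X k) * util m n w x i := by
  have hlim : Tendsto (fun δ : ℝ => (∑ k, X k + n * δ) * util m n w x i) (𝓝[>] 0)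
      (𝓝 ((∑ k, X k + n * 0) * util m n w x i)) :=
    (Continuous.tendsto (by fun_prop) 0).mono_left nhdsWithin_le_nhds
  rw [mul_zero, add_zero] at hlim
  exact ge_of_tendsto hlim <| eventually_mem_nhdsWithin.mono fun δ hδ =>
    hN.budget_mul_sum_weight_le_perturbed hw hX hδ

lemma share_le_tangent {u v s : ℝ} (hu : 0 ≤ u) (hv : 0 < v) (hs : 0 ≤ s) :
    s / (s + v) ≤ u / (u + v) + v / (u + v) ^ 2 * (s - u) := by
  have hgap : u / (u + v) + v / (u + v) ^ 2 * (s - u) - s / (s + v) =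
      v * (s - u) ^ 2 / ((u + v) ^ 2 * (s + v)) := by
    field_simp
    ring
  rw [← sub_nonneg, hgap]
  positivity

theorem isNash_of_equal_marginals (hx : Feasible m n X x) (hw : ∀ i j, 0 ≤ w i j)
    (hv : ∀ i j, 0 < opposingBid x i j) (c : Fin m → ℝ)
    (hc : ∀ i j, w i j * (opposingBid x i j / (∑ k, x k j) ^ 2) = c i) :
    IsNash m n X w x := by
  refine ⟨hx, fun i s hs hs_sum => ?_⟩
  rw [util_update_self, util_eq_sum_opposingBid]
  calc ∑ j, w i j * (s j / (s j + opposingBid x i j))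
      ≤ ∑ j, (w i j * (x i j / (x i j + opposingBid x i j)) + c i * (s j - x i j)) := by
        refine sum_le_sum fun j _ => ?_
        rw [← hc i j, ← add_opposingBid x i j, mul_assoc, ← mul_add]
        exact mul_le_mul_of_nonneg_left (share_le_tangent (hx.1 i j) (hv i j) (hs j)) (hw i j)
    _ = ∑ j, w i j * (x i j / (x i j + opposingBid x i j)) := by
        rw [sum_add_distrib, ← mul_sum, sum_sub_distrib, hs_sum, hx.2 i, sub_self, mul_zero,
          add_zero]

/-- Normalized weights for which the profile `x` is an equilibrium: they are proportional to the
inverse of the derivative `opposingBid x i j / (∑ k, x k j) ^ 2` of the share of user `i` in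
machine `j` with respect to his bid on it, so that his marginal utilities are all equal. -/
noncomputable def rationalizingWeight (x : Fin m → Fin n → ℝ) (i : Fin m) (j : Fin n) : ℝ :=
  (∑ k, x k j) ^ 2 / opposingBid x i j / ∑ l, (∑ k, x k l) ^ 2 / opposingBid x i l

lemma sum_bids_pos (hx : ∀ i j, 0 ≤ x i j) (hv : ∀ i j, 0 < opposingBid x i j) (i : Fin m)
    (j : Fin n) : 0 < ∑ k, x k j :=
  add_opposingBid x i j ▸ add_pos_of_nonneg_of_pos (hx i j) (hv i j)

lemma sq_sum_bids_div_opposingBid_pos (hx : ∀ i j, 0 ≤ x i j)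
    (hv : ∀ i j, 0 < opposingBid x i j) (i : Fin m) (j : Fin n) :
    0 < (∑ k, x k j) ^ 2 / opposingBid x i j :=
  div_pos (pow_pos (sum_bids_pos hx hv i j) 2) (hv i j)

lemma rationalizingWeight_pos (hx : ∀ i j, 0 ≤ x i j) (hv : ∀ i j, 0 < opposingBid x i j)
    (i : Fin m) (j : Fin n) : 0 < rationalizingWeight x i j :=
  div_pos (sq_sum_bids_div_opposingBid_pos hx hv i j)
    (sum_pos (fun l _ => sq_sum_bids_div_opposingBid_pos hx hv i l) ⟨j, mem_univ j⟩)

lemma sum_rationalizingWeight [NeZero n] (hx : ∀ i j, 0 ≤ x i j)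
    (hv : ∀ i j, 0 < opposingBid x i j) (i : Fin m) : ∑ j, rationalizingWeight x i j = 1 := by
  simp only [rationalizingWeight, ← sum_div]
  exact div_self (sum_pos (fun l _ => sq_sum_bids_div_opposingBid_pos hx hv i l) univ_nonempty).ne'

theorem isNash_rationalizingWeight (hx : Feasible m n X x) (hv : ∀ i j, 0 < opposingBid x i j) :
    IsNash m n X (rationalizingWeight x) x := by
  refine isNash_of_equal_marginals hx (fun i j => (rationalizingWeight_pos hx.1 hv i j).le) hv
    (fun i => (∑ l, (∑ k, x k l) ^ 2 / opposingBid x i l)⁻¹) fun i j => ?_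
  have hv_ne := (hv i j).ne'
  have hsum_ne := (sum_bids_pos hx.1 hv i j).ne'
  rw [rationalizingWeight]
  field_simp

lemma util_rationalizingWeight (x : Fin m → Fin n → ℝ) (i : Fin m) :
    util m n (rationalizingWeight x) x i =
      (∑ j, (∑ k, x k j) * x i j / opposingBid x i j) /
        ∑ j, (∑ k, x k j) ^ 2 / opposingBid x i j := by
  rw [util, sum_div]
  refine sum_congr rfl fun j _ => ?_
  rw [rationalizingWeight]
  by_cases h : ∑ k, x k j = 0
  · simp [h]
  · field_simp

end Game

section Tightness

/-- The bids of the two users in the family showing that `1 / 2` is optimal; the exponent `3` lets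
the first user's rationalizing weight on the second machine, of order `p ^ 2 / p ^ 3` before
normalization, outgrow his weight on the first one as `p → 0`. -/
noncomputable def tightBids (p : ℝ) : Fin 2 → Fin 2 → ℝ :=
  ![![1 - p, p], ![1 - p ^ 3, p ^ 3]]

lemma tightBids_pos {p : ℝ} (hp : p ∈ Set.Ioo (0 : ℝ) 1) (i j : Fin 2) : 0 < tightBids p i j := by
  have hp3 : p ^ 3 < 1 := pow_lt_one₀ hp.1.le hp.2 three_ne_zero
  fin_cases i <;> fin_cases j <;> simp [tightBids, hp.1, hp.2, hp3]

lemma feasible_tightBids {p : ℝ} (hp : p ∈ Set.Ioo (0 : ℝ) 1) :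
    Feasible 2 2 (fun _ => 1) (tightBids p) :=
  ⟨fun i j => (tightBids_pos hp i j).le, fun i => by fin_cases i <;> simp [tightBids]⟩

lemma opposingBid_zero {n : ℕ} (x : Fin 2 → Fin n → ℝ) (j : Fin n) : opposingBid x 0 j = x 1 j := by
  have h := add_opposingBid x 0 j
  rwa [Fin.sum_univ_two, add_right_inj] at h

lemma opposingBid_one {n : ℕ} (x : Fin 2 → Fin n → ℝ) (j : Fin n) : opposingBid x 1 j = x 0 j := by
  have h := add_opposingBid x 1 j
  rwa [Fin.sum_univ_two, add_comm (x 0 j), add_right_inj] at h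

lemma opposingBid_tightBids_pos {p : ℝ} (hp : p ∈ Set.Ioo (0 : ℝ) 1) (i j : Fin 2) :
    0 < opposingBid (tightBids p) i j := by
  fin_cases i
  · exact opposingBid_zero _ j ▸ tightBids_pos hp 1 j
  · exact opposingBid_one _ j ▸ tightBids_pos hp 0 j

lemma tendsto_util_tightBids_zero :
    Tendsto (fun p => util 2 2 (rationalizingWeight (tightBids p)) (tightBids p) 0)
      (𝓝[>] 0) (𝓝 1) := by
  -- Multiplying numerator and denominator of the utility by `p` makes them continuous at `0`.
  let f : ℝ → ℝ := fun p =>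
    (p * ((2 - p - p ^ 3) * (1 - p) / (1 - p ^ 3)) + (1 + p ^ 2)) /
      (p * ((2 - p - p ^ 3) ^ 2 / (1 - p ^ 3)) + (1 + p ^ 2) ^ 2)
  have hf : Tendsto f (𝓝 0) (𝓝 1) := by
    have hcont : ContinuousAt f 0 := by fun_prop (disch := norm_num)
    simpa [f] using hcont.tendsto
  refine (hf.mono_left nhdsWithin_le_nhds).congr' ?_
  filter_upwards [eventually_mem_nhdsWithin] with p (hp : 0 < p)
  rw [util_rationalizingWeight, ← mul_div_mul_left _ _ hp.ne']
  simp only [f, tightBids, opposingBid_zero, Fin.sum_univ_two, Matrix.cons_val_zero,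
    Matrix.cons_val_one]
  congr 1 <;> field_simp <;> ring

lemma tendsto_util_tightBids_one :
    Tendsto (fun p => util 2 2 (rationalizingWeight (tightBids p)) (tightBids p) 1)
      (𝓝[>] 0) (𝓝 (1 / 2)) := by
  let f : ℝ → ℝ := fun p =>
    ((2 - p - p ^ 3) * (1 - p ^ 3) / (1 - p) + p ^ 3 * (1 + p ^ 2)) /
      ((2 - p - p ^ 3) ^ 2 / (1 - p) + p * (1 + p ^ 2) ^ 2)
  have hf : Tendsto f (𝓝 0) (𝓝 (1 / 2)) := by
    have hcont : ContinuousAt f 0 := by fun_prop (disch := norm_num)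
    have hf0 : f 0 = 1 / 2 := by norm_num [f]
    exact hf0 ▸ hcont.tendsto
  refine (hf.mono_left nhdsWithin_le_nhds).congr' ?_
  filter_upwards [eventually_mem_nhdsWithin] with p (hp : 0 < p)
  rw [util_rationalizingWeight]
  simp only [f, tightBids, opposingBid_one, Fin.sum_univ_two, Matrix.cons_val_zero,
    Matrix.cons_val_one]
  congr 1 <;> field_simp [hp.ne'] <;> ring

end Tightness

theorem twoPlayer_utility_uniformity_general :
    (∀ (m n : ℕ) (w : Fin m → Fin n → ℝ),
      (∀ i j, 0 ≤ w i j) → (∀ i, ∑ j, w i j = 1) →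
      ∀ x : Fin m → Fin n → ℝ, IsNash m n (fun _ => 1) w x →
        (∀ i, 1 / (m : ℝ) ≤ util m n w x i ∧ util m n w x i ≤ 1) ∧
        ∀ i k, 1 / (m : ℝ) ≤ min (util m n w x i) (util m n w x k) /
                  max (util m n w x i) (util m n w x k)) ∧
    (∀ ε : ℝ, 0 < ε →
      ∃ (n : ℕ) (w : Fin 2 → Fin n → ℝ),
        (∀ i j, 0 ≤ w i j) ∧ (∀ i, ∑ j, w i j = 1) ∧
        (∀ j, ∃ i k : Fin 2, i ≠ k ∧ 0 < w i j ∧ 0 < w k j) ∧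
        ∃ x : Fin 2 → Fin n → ℝ, IsNash 2 n (fun _ => 1) w x ∧
          min (util 2 n w x 0) (util 2 n w x 1) /
            max (util 2 n w x 0) (util 2 n w x 1) < 1 / 2 + ε) := by
  refine ⟨fun m n w hw hw_sum x hN => ?_, fun ε hε => ?_⟩
  · have hpos (i : Fin m) : 0 < (m : ℝ) := Nat.cast_pos.2 i.pos
    have hlower (i : Fin m) : 1 / (m : ℝ) ≤ util m n w x i := by
      have h := hN.budget_mul_sum_weight_le (hw i) one_pos
      rw [div_le_iff₀' (hpos i)]
      simpa [hw_sum] using h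
    have hupper (i : Fin m) : util m n w x i ≤ 1 :=
      hw_sum i ▸ util_le_sum_weight (hw i) hN.1.1
    refine ⟨fun i => ⟨hlower i, hupper i⟩, fun i k => ?_⟩
    have hmax : 0 < max (util m n w x i) (util m n w x k) :=
      lt_max_of_lt_left ((one_div_pos.2 (hpos i)).trans_le (hlower i))
    exact (le_min (hlower i) (hlower k)).trans <|
      le_div_self ((one_div_pos.2 (hpos i)).le.trans (le_min (hlower i) (hlower k))) hmax
        (max_le (hupper i) (hupper k))
  · have hratio := (tendsto_util_tightBids_zero.min tendsto_util_tightBids_one).div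
      (tendsto_util_tightBids_zero.max tendsto_util_tightBids_one) (by norm_num)
    have hlimit : min (1 : ℝ) (1 / 2) / max 1 (1 / 2) < 1 / 2 + ε := by norm_num [hε]
    obtain ⟨p, hlt, hp⟩ := ((hratio.eventually_lt_const hlimit).and
      (Ioo_mem_nhdsGT one_pos)).exists
    have hx := feasible_tightBids hp
    have hv := opposingBid_tightBids_pos hp
    have hw := rationalizingWeight_pos hx.1 hv
    exact ⟨2, rationalizingWeight (tightBids p), fun i j => (hw i j).le,
      sum_rationalizingWeight hx.1 hv, fun j => ⟨0, 1, zero_ne_one, hw 0 j, hw 1 j⟩,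
      tightBids p, isNash_rationalizingWeight hx hv, hlt⟩

/-- Theorem 2, utility uniformity: in any strongly competitive normalized
two-player price-anticipating allocation game, at every Nash equilibrium each user's
utility lies in `[1/2, 1]`; consequently the utility uniformity
`min_i U_i / max_i U_i` is at least `1/2`, and this bound is tight in the worst case. -/
theorem twoPlayer_utility_uniformity :
    (∀ (n : ℕ) (w : Fin 2 → Fin n → ℝ),
      (∀ i j, 0 ≤ w i j) → (∀ i, ∑ j, w i j = 1) →
      (∀ j, ∃ i k : Fin 2, i ≠ k ∧ 0 < w i j ∧ 0 < w k j) →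
      ∀ x : Fin 2 → Fin n → ℝ, IsNash 2 n (fun _ => 1) w x →
        (∀ i, 1 / 2 ≤ util 2 n w x i ∧ util 2 n w x i ≤ 1) ∧
        1 / 2 ≤ min (util 2 n w x 0) (util 2 n w x 1) /
                  max (util 2 n w x 0) (util 2 n w x 1)) ∧
    (∀ ε : ℝ, 0 < ε →
      ∃ (n : ℕ) (w : Fin 2 → Fin n → ℝ),
        (∀ i j, 0 ≤ w i j) ∧ (∀ i, ∑ j, w i j = 1) ∧
        (∀ j, ∃ i k : Fin 2, i ≠ k ∧ 0 < w i j ∧ 0 < w k j) ∧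
        ∃ x : Fin 2 → Fin n → ℝ, IsNash 2 n (fun _ => 1) w x ∧
          min (util 2 n w x 0) (util 2 n w x 1) /
            max (util 2 n w x 0) (util 2 n w x 1) < 1 / 2 + ε) := by
  refine ⟨fun n w hw hw_sum _ x hN => ?_, twoPlayer_utility_uniformity_general.2⟩
  exact (twoPlayer_utility_uniformity_general.1 2 n w hw hw_sum x hN).imp_right fun h => h 0 1
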